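/- Fix an integer n ≥ 2 and a prime ℓ. Suppose that for every ε > 0 there exists a constant C such that for every integer D ≥ 1 the number of degree-(nℓ) fields L with D_L = D is at most C·D^{ε}. Then for every ε > 0 there exists a constant C' such that every degree-n field K satisfies |Cl_K[ℓ]| ≤ C' · D_K^{ε}. -/

import Mathlib

open NumberField Filter

-- The absolute value of the discriminant of an intermediate field `K` of `ℚ̄/ℚ`
-- (junk value `0` in the irrelevant case that `K/ℚ` is infinite-dimensional).
open scoped Classical in
noncomputable def absDisc (K : IntermediateField ℚ (AlgebraicClosure ℚ)) : ℕ :=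
  if h : FiniteDimensional ℚ K then
    letI : NumberField K := { to_charZero := inferInstance, to_finiteDimensional := h }
    (NumberField.discr K).natAbs
  else 0

/-- The cardinality `|Cl_K[m]|` of the `m`-torsion subgroup of the class group of `K`. -/
noncomputable def clTors (K : IntermediateField ℚ (AlgebraicClosure ℚ)) (m : ℕ) : ℕ :=
  Nat.card {x : ClassGroup (𝓞 K) // x ^ m = 1}

open Polynomial in
lemma trace_root {K L : Type*} [Field K] [Field L] [Algebra K L] [FiniteDimensional K L]
    {ℓ : ℕ} (hℓ : ℓ.Prime) (hd : Module.finrank K L = ℓ) (γ : L) (c : K)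
    (hγ : γ ^ ℓ = algebraMap K L c) (hn : ∀ b : K, algebraMap K L b ≠ γ) :
    Algebra.trace K L γ = 0 := by
  have hint : IsIntegral K γ := Algebra.IsIntegral.isIntegral γ
  have hdeg : (minpoly K γ).natDegree = ℓ := by
    have h1 : (minpoly K γ).natDegree ∣ ℓ := hd ▸ minpoly.degree_dvd hint
    rcases (Nat.dvd_prime hℓ).1 h1 with h | h
    · obtain ⟨b, hb⟩ := minpoly.natDegree_eq_one_iff.1 h
      exact absurd hb (hn b)
    · exact h
  have hmin : minpoly K γ = X ^ ℓ - C c := by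
    symm
    refine eq_of_monic_of_dvd_of_natDegree_le (minpoly.monic hint)
      (monic_X_pow_sub_C c hℓ.ne_zero) (minpoly.dvd K γ (by simp [hγ])) ?_
    rw [natDegree_X_pow_sub_C, hdeg]
  rw [trace_eq_finrank_mul_minpoly_nextCoeff, hmin, nextCoeff_of_natDegree_pos (by rw [natDegree_X_pow_sub_C]; exact hℓ.pos), natDegree_X_pow_sub_C]
  have := hℓ.two_le
  simp [coeff_X_pow, coeff_C, show ℓ - 1 ≠ ℓ by omega, show ℓ - 1 ≠ 0 by omega]

lemma pow_mem_of_coprime {K L : Type*} [Field K] [Field L] [Algebra K L]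
    {ℓ : ℕ} (hℓ : ℓ.Prime) (θ : L) (a : K) (h0 : θ ≠ 0)
    (hθ : θ ^ ℓ = algebraMap K L a) (hn : ∀ b : K, algebraMap K L b ≠ θ)
    (i j : ℕ) (hi : i < ℓ) (hj : j < ℓ) (hij : i ≠ j) (b : K) :
    algebraMap K L b ≠ θ ^ i * (θ ^ j)⁻¹ := by
  intro hb
  have hb' : θ ^ ((i : ℤ) - j) = algebraMap K L b := by
    rw [hb, zpow_sub₀ h0]; simp [div_eq_mul_inv]
  have hco : IsCoprime ((i : ℤ) - j) (ℓ : ℤ) := by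
    rw [isCoprime_comm, (Nat.prime_iff_prime_int.1 hℓ).coprime_iff_not_dvd]
    intro hdvd
    have := Int.eq_zero_of_abs_lt_dvd hdvd (by rw [abs_lt]; constructor <;> omega)
    omega
  obtain ⟨u, v, huv⟩ := hco
  apply hn (b ^ u * a ^ v)
  rw [map_mul, map_zpow₀, map_zpow₀, ← hb', ← hθ, ← zpow_natCast, ← zpow_mul, ← zpow_mul,
    ← zpow_add₀ h0, mul_comm _ u, mul_comm _ v, huv, zpow_one]

lemma exists_expansion {K L : Type*} [Field K] [Field L] [Algebra K L] [FiniteDimensional K L]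
    {ℓ : ℕ} (hℓ : ℓ.Prime) (hd : Module.finrank K L = ℓ) (θ : L) (a : K) (h0 : θ ≠ 0)
    (hθ : θ ^ ℓ = algebraMap K L a) (hn : ∀ b : K, algebraMap K L b ≠ θ) (x : L) :
    ∃ c : Fin ℓ → K, x = ∑ i, algebraMap K L (c i) * θ ^ (i : ℕ) ∧
      ∀ j : Fin ℓ, Algebra.trace K L (x * (θ ^ (j : ℕ))⁻¹) = ℓ * c j := by
  have hint : IsIntegral K θ := Algebra.IsIntegral.isIntegral θ
  have htop : IntermediateField.adjoin K {θ} = ⊤ := by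
    have := IntermediateField.isSimpleOrder_of_finrank_prime K L (hd ▸ hℓ)
    rcases eq_bot_or_eq_top (IntermediateField.adjoin K {θ}) with h | h
    · rw [IntermediateField.adjoin_simple_eq_bot_iff, IntermediateField.mem_bot] at h
      obtain ⟨b, hb⟩ := h
      exact absurd hb (hn b)
    · exact h
  have hdeg : (minpoly K θ).natDegree = ℓ := by
    rw [← IntermediateField.adjoin.finrank hint, htop, IntermediateField.finrank_top', hd]
  have hspan : Submodule.span K (Set.range fun i : Fin ℓ => θ ^ (i : ℕ)) = ⊤ := by
    apply LinearIndependent.span_eq_top_of_card_eq_finrank'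
    · have := linearIndependent_pow (K := K) θ
      rw [hdeg] at this
      exact this
    · simp [hd]
  have hx : x ∈ Submodule.span K (Set.range fun i : Fin ℓ => θ ^ (i : ℕ)) := by rw [hspan]; trivial
  rw [Submodule.mem_span_range_iff_exists_fun] at hx
  obtain ⟨c, hc⟩ := hx
  refine ⟨c, by simp [← hc, Algebra.smul_def], fun j => ?_⟩
  rw [← hc, Finset.sum_mul, map_sum, Finset.sum_eq_single j]
  · rw [smul_mul_assoc, mul_inv_cancel₀ (pow_ne_zero _ h0), map_smul, ← map_one (algebraMap K L),
      Algebra.trace_algebraMap, hd]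
    simp [mul_comm]
  · intro i _ hij
    rw [smul_mul_assoc, map_smul, trace_root hℓ hd _ (a ^ (i:ℕ) * (a ^ (j:ℕ))⁻¹), smul_zero]
    · rw [mul_pow, inv_pow, ← pow_mul, ← pow_mul, mul_comm _ ℓ, mul_comm _ ℓ, pow_mul, pow_mul, hθ]
      simp
    · exact pow_mem_of_coprime hℓ θ a h0 hθ hn i j i.2 j.2 (fun h => hij (Fin.ext h))
  · simp

lemma exists_eq_mul_pow {K L : Type*} [Field K] [CharZero K] [Field L] [Algebra K L] [FiniteDimensional K L]
    {ℓ : ℕ} (hℓ : ℓ.Prime) (hd : Module.finrank K L = ℓ) (θ : L) (a : K) (h0 : θ ≠ 0)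
    (hθ : θ ^ ℓ = algebraMap K L a) (hn : ∀ b : K, algebraMap K L b ≠ θ) (θ' : L) (a' : K)
    (h0' : θ' ≠ 0) (hθ' : θ' ^ ℓ = algebraMap K L a') :
    ∃ j < ℓ, ∃ c : K, θ' = algebraMap K L c * θ ^ j := by
  obtain ⟨c, hc, ht⟩ := exists_expansion hℓ hd θ a h0 hθ hn θ'
  have : ∃ j, c j ≠ 0 := by
    by_contra! h
    apply h0'
    rw [hc]; simp [h]
  obtain ⟨j, hj⟩ := this
  refine ⟨j, j.2, ?_⟩
  by_contra! hcon
  have := trace_root hℓ hd (θ' * (θ ^ (j:ℕ))⁻¹) (a' * (a ^ (j:ℕ))⁻¹) (by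
    rw [mul_pow, inv_pow, hθ', ← pow_mul, mul_comm _ ℓ, pow_mul, hθ]; simp) (fun b hb => hcon b (by
      rw [hb]; field_simp))
  rw [ht j] at this
  exact mul_ne_zero (Nat.cast_ne_zero.2 hℓ.ne_zero) hj this

lemma pow_mul_integral {K : Type*} [Field K] (J : Ideal (𝓞 K)) (y : K)
    (hy : ∀ b ∈ J, IsIntegral ℤ (y * algebraMap (𝓞 K) K b)) (m : ℕ) :
    ∀ z ∈ J ^ m, IsIntegral ℤ (y ^ m * algebraMap (𝓞 K) K z) := by
  induction m with
  | zero => intro z _; simpa using RingOfIntegers.isIntegral_coe z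
  | succ m ih =>
    intro z hz
    rw [pow_succ] at hz
    refine Submodule.mul_induction_on hz ?_ ?_
    · intro u hu v hv
      have := (ih u hu).mul (hy v hv)
      have e : y ^ (m + 1) * algebraMap (𝓞 K) K (u * v) =
        y ^ m * algebraMap (𝓞 K) K u * (y * algebraMap (𝓞 K) K v) := by rw [map_mul]; ring
      rw [e]
      exact this
    · intro u v hu hv
      rw [map_add, mul_add]
      exact hu.add hv

lemma ell_mem_different {K L : Type*} [Field K] [NumberField K] [Field L] [NumberField L]
    [Algebra K L]
    {ℓ : ℕ} (hℓ : ℓ.Prime) (hd : Module.finrank K L = ℓ) (θ : L) (a : 𝓞 K) (h0 : θ ≠ 0)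
    (hθ : θ ^ ℓ = algebraMap K L (algebraMap (𝓞 K) K a)) (hn : ∀ b : K, algebraMap K L b ≠ θ)
    (I : Ideal (𝓞 K)) (hI : I ^ ℓ = Ideal.span {a}) :
    (ℓ : 𝓞 L) ∈ differentIdeal (𝓞 K) (𝓞 L) := by
  have ha : algebraMap (𝓞 K) K a ≠ 0 := by
    intro h
    rw [h, map_zero] at hθ
    exact h0 (pow_eq_zero_iff hℓ.ne_zero |>.1 hθ)
  have key : ∀ x ∈ Submodule.traceDual (𝓞 K) K (1 : Submodule (𝓞 L) L), IsIntegral ℤ ((ℓ : L) * x) := by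
    intro x hx
    rw [Submodule.mem_traceDual] at hx
    obtain ⟨c, hc, ht⟩ := exists_expansion hℓ hd θ (algebraMap (𝓞 K) K a) h0 hθ hn x
    rw [hc, Finset.mul_sum]
    refine IsIntegral.sum _ fun j _ => ?_
    have h1 : ∀ b ∈ I ^ (j : ℕ), IsIntegral ℤ ((ℓ * c j : K) * algebraMap (𝓞 K) K b) := by
      intro b hb
      have hb2 : b ^ ℓ ∈ Ideal.span {a ^ (j : ℕ)} := by
        rw [← Ideal.span_singleton_pow, ← hI, ← pow_mul, mul_comm, pow_mul]
        exact Ideal.pow_mem_pow hb _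
      obtain ⟨d, hdd⟩ := Ideal.mem_span_singleton'.1 hb2
      have hint : IsIntegral ℤ (algebraMap K L (algebraMap (𝓞 K) K b) * (θ ^ (j : ℕ))⁻¹) := by
        apply IsIntegral.of_pow hℓ.pos
        have : (algebraMap K L (algebraMap (𝓞 K) K b) * (θ ^ (j : ℕ))⁻¹) ^ ℓ = algebraMap K L (algebraMap (𝓞 K) K d) := by
          rw [mul_pow, inv_pow, ← pow_mul, mul_comm _ ℓ, pow_mul, hθ,
            ← map_pow (algebraMap K L), ← map_pow (algebraMap K L), ← map_inv₀, ← map_mul]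
          congr 1
          rw [mul_inv_eq_iff_eq_mul₀ (pow_ne_zero _ ha)]
          rw [← map_pow, ← map_pow, ← map_mul, hdd]
        rw [this]
        exact (RingOfIntegers.isIntegral_coe d).map (algebraMap K L).toIntAlgHom
      have := hx (algebraMap K L (algebraMap (𝓞 K) K b) * (θ ^ (j : ℕ))⁻¹) (Submodule.mem_one.2 ⟨⟨_, hint⟩, rfl⟩)
      obtain ⟨e, he⟩ := this
      rw [Algebra.traceForm_apply, mul_left_comm, ← Algebra.smul_def, map_smul, ht j] at he
      have he' : (ℓ * c j : K) * algebraMap (𝓞 K) K b = algebraMap (𝓞 K) K e := by rw [he, smul_eq_mul, mul_comm]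
      rw [he']
      exact RingOfIntegers.isIntegral_coe e
    have h2 := pow_mul_integral (I ^ (j : ℕ)) _ h1 ℓ (a ^ (j : ℕ)) (by
      rw [← pow_mul, mul_comm, pow_mul, hI]
      exact Ideal.pow_mem_pow (Ideal.mem_span_singleton_self a) _)
    apply IsIntegral.of_pow hℓ.pos
    have := h2.map (algebraMap K L).toIntAlgHom
    change IsIntegral ℤ (algebraMap K L _) at this
    rw [map_mul, map_pow, map_pow, map_pow, map_mul, map_natCast, ← hθ] at this
    have e : ((ℓ : L) * (algebraMap K L (c j) * θ ^ (j : ℕ))) ^ ℓ =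
      ((ℓ : L) * algebraMap K L (c j)) ^ ℓ * (θ ^ ℓ) ^ (j : ℕ) := by ring
    rw [e]
    exact this
  have hmem : algebraMap (𝓞 L) L (ℓ : 𝓞 L) ∈ IsLocalization.coeSubmodule L (differentIdeal (𝓞 K) (𝓞 L)) := by
    rw [coeSubmodule_differentIdeal (𝓞 K) K, Submodule.mem_div_iff_forall_mul_mem]
    intro y hy
    refine Submodule.mem_one.2 ⟨⟨_, key y hy⟩, ?_⟩
    rw [map_natCast]; rfl
  obtain ⟨z, hz, hzz⟩ := hmem
  have : z = (ℓ : 𝓞 L) := FaithfulSMul.algebraMap_injective (𝓞 L) L hzz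
  exact this ▸ hz

lemma discr_form {K L : Type*} [Field K] [NumberField K] [Field L] [NumberField L]
    [Algebra K L]
    {ℓ : ℕ} (hℓ : ℓ.Prime) (hd : Module.finrank K L = ℓ) (θ : L) (a : 𝓞 K) (h0 : θ ≠ 0)
    (hθ : θ ^ ℓ = algebraMap K L (algebraMap (𝓞 K) K a)) (hn : ∀ b : K, algebraMap K L b ≠ θ)
    (I : Ideal (𝓞 K)) (hI : I ^ ℓ = Ideal.span {a}) :
    ∃ m ∈ Finset.Icc 1 (ℓ ^ Module.finrank ℚ L), (discr L).natAbs = m * (discr K).natAbs ^ ℓ := by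
  have hmem := ell_mem_different hℓ hd θ a h0 hθ hn I hI
  refine ⟨_, ?_, hd ▸ natAbs_discr_eq_absNorm_differentIdeal_mul_natAbs_discr_pow K (𝓞 K) L (𝓞 L)⟩
  have hdvd : Ideal.absNorm (differentIdeal (𝓞 K) (𝓞 L)) ∣ ℓ ^ Module.finrank ℚ L := by
    have := Ideal.absNorm_dvd_absNorm_of_le ((Ideal.span_singleton_le_iff_mem _).2 hmem)
    rwa [Ideal.absNorm_span_natCast, RingOfIntegers.rank] at this
  have hpos : 0 < ℓ ^ Module.finrank ℚ L := pow_pos hℓ.pos _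
  exact Finset.mem_Icc.2 ⟨Nat.pos_of_dvd_of_pos hdvd hpos, Nat.le_of_dvd hpos hdvd⟩

lemma ideal_pow_inj {R : Type*} [CommRing R] [IsDedekindDomain R] {I J : Ideal R} {m : ℕ}
    (hm : m ≠ 0) (h : I ^ m = J ^ m) : I = J :=
  dvd_antisymm ((UniqueFactorizationMonoid.pow_dvd_pow_iff_dvd hm).1 h.dvd)
    ((UniqueFactorizationMonoid.pow_dvd_pow_iff_dvd hm).1 h.symm.dvd)

open nonZeroDivisors in
/-- `(I, a)` represents the `ℓ`-torsion class `x`. -/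
structure TorsData {K : Type*} [Field K] [NumberField K] (ℓ : ℕ) (x : ClassGroup (𝓞 K))
    (I : (Ideal (𝓞 K))⁰) (a : 𝓞 K) : Prop where
  hx : ClassGroup.mk0 I = x
  hI : (I : Ideal (𝓞 K)) ^ ℓ = Ideal.span {a}
  ha : a ≠ 0

open nonZeroDivisors in
lemma exists_torsData {K : Type*} [Field K] [NumberField K] {ℓ : ℕ} 
    (x : ClassGroup (𝓞 K)) (hx : x ^ ℓ = 1) :
    ∃ (I : (Ideal (𝓞 K))⁰) (a : 𝓞 K), TorsData ℓ x I a := by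
  obtain ⟨I, rfl⟩ := ClassGroup.mk0_surjective x
  rw [← map_pow] at hx
  have := (ClassGroup.mk0_eq_one_iff (I ^ ℓ).2).1 hx
  obtain ⟨a, ha⟩ := this
  refine ⟨I, a, rfl, by simpa using ha, ?_⟩
  rintro rfl
  have h := nonZeroDivisors.coe_ne_zero (I ^ ℓ)
  apply h
  rw [ha]; simp

open nonZeroDivisors in
lemma torsData_rel {K : Type*} [Field K] [NumberField K] {ℓ : ℕ} (hℓ : ℓ ≠ 0)
    {x y : ClassGroup (𝓞 K)} {I J : (Ideal (𝓞 K))⁰} {a b : 𝓞 K}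
    (hx : TorsData ℓ x I a) (hy : TorsData ℓ y J b) (c : K) (j : ℕ)
    (h : algebraMap (𝓞 K) K b = c ^ ℓ * algebraMap (𝓞 K) K a ^ j) : y = x ^ j := by
  obtain ⟨u, v, hv, rfl⟩ := IsFractionRing.div_surjective (A := 𝓞 K) c
  have hv0 : v ≠ 0 := nonZeroDivisors.ne_zero hv
  have hvK : algebraMap (𝓞 K) K v ≠ 0 := by simpa using hv0
  have h1 : v ^ ℓ * b = u ^ ℓ * a ^ j := by
    apply FaithfulSMul.algebraMap_injective (𝓞 K) K
    simp only [map_mul, map_pow]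
    rw [h, div_pow]
    field_simp
  have hu0 : u ≠ 0 := by
    rintro rfl
    rw [zero_pow hℓ, zero_mul] at h1
    exact mul_ne_zero (pow_ne_zero _ hv0) hy.ha h1
  have h2 : Ideal.span {v} * (J : Ideal (𝓞 K)) = Ideal.span {u} * ((I ^ j : (Ideal (𝓞 K))⁰) : Ideal (𝓞 K)) := by
    apply ideal_pow_inj hℓ
    rw [mul_pow, mul_pow, hy.hI, SubmonoidClass.coe_pow, ← pow_mul, mul_comm j, pow_mul, hx.hI]
    simp only [Ideal.span_singleton_pow, Ideal.span_singleton_mul_span_singleton, h1]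
  rw [← hx.hx, ← hy.hx, ← map_pow]
  exact ClassGroup.mk0_eq_mk0_iff.2 ⟨v, u, hv0, hu0, h2⟩

open nonZeroDivisors in
lemma torsData_not_pow {K : Type*} [Field K] [NumberField K] {ℓ : ℕ} (hℓ : ℓ ≠ 0)
    {x : ClassGroup (𝓞 K)} {I : (Ideal (𝓞 K))⁰} {a : 𝓞 K}
    (hx : TorsData ℓ x I a) (h1 : x ≠ 1) (b : K) : b ^ ℓ ≠ algebraMap (𝓞 K) K a := by
  intro h
  exact h1 (by simpa using torsData_rel hℓ hx hx b 0 (by simp [h]))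

lemma absDisc_eq (K : IntermediateField ℚ (AlgebraicClosure ℚ)) [h : NumberField K] :
    absDisc K = (discr K).natAbs := by
  rw [absDisc, dif_pos h.to_finiteDimensional]

section

open IntermediateField

variable {K : IntermediateField ℚ (AlgebraicClosure ℚ)} [NumberField K] {ℓ : ℕ}

open Polynomial in
lemma finrank_adjoin_root (hℓ : ℓ.Prime) (a : K) (ha : ∀ b : K, b ^ ℓ ≠ a)
    (θ : AlgebraicClosure ℚ) (hθ : θ ^ ℓ = a) :
    Module.finrank K K⟮θ⟯ = ℓ := by
  have hirr := X_pow_sub_C_irreducible_of_prime hℓ ha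
  have hm : X ^ ℓ - C a = minpoly K θ :=
    minpoly.eq_of_irreducible_of_monic hirr (by simp [hθ, IntermediateField.algebraMap_apply])
      (monic_X_pow_sub_C a hℓ.ne_zero)
  rw [IntermediateField.adjoin.finrank, ← hm, natDegree_X_pow_sub_C]
  exact IsIntegral.of_pow hℓ.pos (hθ ▸ isIntegral_algebraMap (R := K) (x := a))

lemma gen_notMem (hℓ : ℓ.Prime) (a : K) (ha : ∀ b : K, b ^ ℓ ≠ a)
    (θ : AlgebraicClosure ℚ) (hθ : θ ^ ℓ = a) (b : K) :
    algebraMap K K⟮θ⟯ b ≠ AdjoinSimple.gen K θ := by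
  intro h
  apply ha b
  have h2 := congrArg (algebraMap K⟮θ⟯ (AlgebraicClosure ℚ)) h
  rw [AdjoinSimple.algebraMap_gen, ← IsScalarTower.algebraMap_apply] at h2
  apply (algebraMap K (AlgebraicClosure ℚ)).injective
  rw [map_pow, h2, hθ]
  rfl

lemma gen_pow (a : K) (θ : AlgebraicClosure ℚ) (hθ : θ ^ ℓ = a) :
    AdjoinSimple.gen K θ ^ ℓ = algebraMap K K⟮θ⟯ a := by
  apply (algebraMap K⟮θ⟯ (AlgebraicClosure ℚ)).injective
  rw [map_pow, AdjoinSimple.algebraMap_gen, ← IsScalarTower.algebraMap_apply, hθ]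
  rfl

lemma field_props (hℓ : ℓ.Prime) {x : ClassGroup (𝓞 K)} {I a} (hx : TorsData ℓ x I a) (h1 : x ≠ 1)
    (θ : AlgebraicClosure ℚ) (hθ : θ ^ ℓ = (algebraMap (𝓞 K) K a : K)) :
    Module.finrank ℚ (restrictScalars ℚ K⟮θ⟯) = Module.finrank ℚ K * ℓ ∧
    ∃ m ∈ Finset.Icc 1 (ℓ ^ (Module.finrank ℚ K * ℓ)),
      absDisc (restrictScalars ℚ K⟮θ⟯) = m * absDisc K ^ ℓ := by
  have hnp := torsData_not_pow hℓ.ne_zero hx h1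
  have hd := finrank_adjoin_root hℓ _ hnp θ hθ
  have hfin : FiniteDimensional K K⟮θ⟯ := Module.finite_of_finrank_pos (hd ▸ hℓ.pos)
  have hfinQ : FiniteDimensional ℚ K⟮θ⟯ := Module.Finite.trans K K⟮θ⟯
  have : NumberField K⟮θ⟯ := { to_charZero := inferInstance, to_finiteDimensional := hfinQ }
  have hr : Module.finrank ℚ K⟮θ⟯ = Module.finrank ℚ K * ℓ := by
    have hfree : Module.Free K K⟮θ⟯ := Module.Free.of_divisionRing K K⟮θ⟯
    have hfreeQ : Module.Free ℚ K := Module.Free.of_divisionRing ℚ K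
    rw [← Module.finrank_mul_finrank ℚ K K⟮θ⟯, hd]
  have : NumberField (restrictScalars ℚ K⟮θ⟯) :=
    { to_charZero := inferInstance, to_finiteDimensional := hfinQ }
  refine ⟨hr, ?_⟩
  have hg := gen_pow _ θ hθ
  have h0 : AdjoinSimple.gen K θ ≠ 0 := by
    intro h
    exact gen_notMem hℓ _ hnp θ hθ 0 (by rw [h, map_zero])
  obtain ⟨m, hm, hm2⟩ := discr_form hℓ hd (AdjoinSimple.gen K θ) a h0 hg
    (gen_notMem hℓ _ hnp θ hθ) I hx.hI
  rw [hr] at hm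
  refine ⟨m, hm, ?_⟩
  rw [absDisc_eq, absDisc_eq, ← hm2]
  congr 1

lemma field_inj (hℓ : ℓ.Prime) {x y : ClassGroup (𝓞 K)} {I J a b} (hx : TorsData ℓ x I a)
    (h1 : x ≠ 1) (hy : TorsData ℓ y J b)
    (θ θ' : AlgebraicClosure ℚ) (hθ : θ ^ ℓ = (algebraMap (𝓞 K) K a : K))
    (hθ' : θ' ^ ℓ = (algebraMap (𝓞 K) K b : K)) (hmem : θ' ∈ K⟮θ⟯) :
    ∃ j < ℓ, x ^ j = y := by
  have hnp := torsData_not_pow hℓ.ne_zero hx h1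
  have hd := finrank_adjoin_root hℓ _ hnp θ hθ
  have hfin : FiniteDimensional K K⟮θ⟯ := Module.finite_of_finrank_pos (hd ▸ hℓ.pos)
  have hg := gen_pow _ θ hθ
  have h0 : AdjoinSimple.gen K θ ≠ 0 := by
    intro h
    exact gen_notMem hℓ _ hnp θ hθ 0 (by rw [h, map_zero])
  have hbK : algebraMap (𝓞 K) K b ≠ 0 := by simpa using hy.ha
  have hp' : (⟨θ', hmem⟩ : K⟮θ⟯) ^ ℓ = algebraMap K K⟮θ⟯ (algebraMap (𝓞 K) K b) :=
    Subtype.ext hθ'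
  have h0' : (⟨θ', hmem⟩ : K⟮θ⟯) ≠ 0 := by
    intro h
    rw [h, zero_pow hℓ.ne_zero] at hp'
    exact hbK ((algebraMap K K⟮θ⟯).injective (by rw [← hp', map_zero]))
  obtain ⟨j, hj, c, hc⟩ := exists_eq_mul_pow hℓ hd (AdjoinSimple.gen K θ) _ h0 hg
    (gen_notMem hℓ _ hnp θ hθ) _ _ h0' hp'
  refine ⟨j, hj, (torsData_rel hℓ.ne_zero hx hy c j ?_).symm⟩
  apply (algebraMap K K⟮θ⟯).injective
  rw [← hp', hc, mul_pow, ← pow_mul, mul_comm j, pow_mul, hg]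
  simp only [map_mul, map_pow]

end

lemma finite_fields (d D : ℕ) (hd : 0 < d) : {L : IntermediateField ℚ (AlgebraicClosure ℚ) |
    Module.finrank ℚ L = d ∧ absDisc L = D}.Finite := by
  refine ((NumberField.finite_of_discr_bdd (AlgebraicClosure ℚ) D).image Subtype.val).subset ?_
  rintro L ⟨h1, h2⟩
  have hf : FiniteDimensional ℚ L := Module.finite_of_finrank_pos (h1 ▸ hd)
  refine ⟨⟨L, hf⟩, ?_, rfl⟩
  have : NumberField L := { to_charZero := inferInstance, to_finiteDimensional := hf }
  rw [absDisc_eq] at h2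
  change |discr L| ≤ D
  rw [← h2]
  simp

/-- If the discriminant multiplicity conjecture holds in degree `nℓ`
(at most `≪_ε D^ε` degree-`nℓ` fields of discriminant `D`), then the `ℓ`-torsion
conjecture holds in degree `n`: `|Cl_K[ℓ]| ≪_ε D_K^ε`. -/
theorem discMultiplicityConjecture_implies_ellTorsionConjecture
    (n : ℕ) (hn : 2 ≤ n) (ℓ : ℕ) (hℓ : ℓ.Prime)
    (hD : ∀ ε : ℝ, 0 < ε → ∃ C : ℝ, ∀ D : ℕ, 1 ≤ D →
      (({L : IntermediateField ℚ (AlgebraicClosure ℚ) |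
          Module.finrank ℚ L = n * ℓ ∧ absDisc L = D}).ncard : ℝ)
        ≤ C * (D : ℝ) ^ ε) :
    ∀ ε : ℝ, 0 < ε → ∃ C' : ℝ,
      ∀ K : IntermediateField ℚ (AlgebraicClosure ℚ), Module.finrank ℚ K = n →
        (clTors K ℓ : ℝ) ≤ C' * (absDisc K : ℝ) ^ ε := by
  classical
  intro ε hε
  have hℓ0 : (0 : ℝ) < ℓ := by exact_mod_cast hℓ.pos
  obtain ⟨C, hC⟩ := hD (ε / ℓ) (by positivity)
  refine ⟨1 + ℓ * ∑ m ∈ Finset.Icc 1 (ℓ ^ (n * ℓ)), C * (m : ℝ) ^ (ε / ℓ), fun K hK => ?_⟩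
  have hf : FiniteDimensional ℚ K := Module.finite_of_finrank_pos (by omega)
  have hNF : NumberField K := { to_charZero := inferInstance, to_finiteDimensional := hf }
  have hDK : 1 ≤ absDisc K := by
    rw [absDisc_eq]
    exact Int.natAbs_pos.2 (discr_ne_zero K)
  let F : ℕ → Set (IntermediateField ℚ (AlgebraicClosure ℚ)) := fun m =>
    {L | Module.finrank ℚ L = n * ℓ ∧ absDisc L = m * absDisc K ^ ℓ}
  have hFfin : ∀ m, (F m).Finite := fun m => finite_fields _ _ (by
    have := hℓ.pos; positivity)
  let U : Finset (IntermediateField ℚ (AlgebraicClosure ℚ)) :=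
    (Finset.Icc 1 (ℓ ^ (n * ℓ))).biUnion fun m => (hFfin m).toFinset
  have hex : ∀ x : ClassGroup (𝓞 K), ∃ θ : AlgebraicClosure ℚ, x ^ ℓ = 1 →
      ∃ I a, TorsData ℓ x I a ∧ θ ^ ℓ = (algebraMap (𝓞 K) K a : K) := by
    intro x
    by_cases hx : x ^ ℓ = 1
    · obtain ⟨I, a, h⟩ := exists_torsData x hx
      obtain ⟨θ, hθ⟩ := IsAlgClosed.exists_pow_nat_eq
        ((algebraMap (𝓞 K) K a : K) : AlgebraicClosure ℚ) hℓ.pos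
      exact ⟨θ, fun _ => ⟨I, a, h, hθ⟩⟩
    · exact ⟨0, fun h => absurd h hx⟩
  choose θ hθ using hex
  let S : Finset (ClassGroup (𝓞 K)) := Finset.univ.filter fun x => x ^ ℓ = 1
  have hcl : clTors K ℓ = S.card := by
    rw [clTors, Nat.card_eq_fintype_card, Fintype.card_subtype]
  let f : ClassGroup (𝓞 K) → IntermediateField ℚ (AlgebraicClosure ℚ) := fun x =>
    IntermediateField.restrictScalars ℚ (IntermediateField.adjoin K {θ x})
  have hsub : (S.erase 1).image f ⊆ U := by
    intro L hL
    obtain ⟨x, hx, rfl⟩ := Finset.mem_image.1 hL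
    obtain ⟨hx1, hxS⟩ := Finset.mem_erase.1 hx
    obtain ⟨I, a, h, ht⟩ := hθ x (Finset.mem_filter.1 hxS).2
    obtain ⟨h2, m, hm, h3⟩ := field_props hℓ h hx1 (θ x) ht
    rw [hK] at h2 hm
    exact Finset.mem_biUnion.2 ⟨m, hm, (hFfin m).mem_toFinset.2 ⟨h2, h3⟩⟩
  have hfib : (S.erase 1).card ≤ ℓ * ((S.erase 1).image f).card := by
    refine Finset.card_le_mul_card_image _ _ fun L hL => ?_
    obtain ⟨x, hx, rfl⟩ := Finset.mem_image.1 hL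
    obtain ⟨hx1, hxS⟩ := Finset.mem_erase.1 hx
    obtain ⟨I, a, h, ht⟩ := hθ x (Finset.mem_filter.1 hxS).2
    have : (S.erase 1).filter (fun y => f y = f x) ⊆ (Finset.range ℓ).image fun j => x ^ j := by
      intro y hy
      obtain ⟨hyS, hyf⟩ := Finset.mem_filter.1 hy
      obtain ⟨J, b, h', ht'⟩ := hθ y (Finset.mem_filter.1 (Finset.mem_erase.1 hyS).2).2
      have hmem : θ y ∈ f x := by
        rw [← hyf]
        exact IntermediateField.mem_adjoin_simple_self K (θ y)
      obtain ⟨j, hj, hxy⟩ := field_inj hℓ h hx1 h' (θ x) (θ y) ht ht' hmem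
      exact Finset.mem_image.2 ⟨j, Finset.mem_range.2 hj, hxy⟩
    calc _ ≤ _ := Finset.card_le_card this
      _ ≤ _ := Finset.card_image_le
      _ = ℓ := Finset.card_range ℓ
  have hUcard : (U.card : ℝ) ≤ ∑ m ∈ Finset.Icc 1 (ℓ ^ (n * ℓ)),
      C * (m : ℝ) ^ (ε / ℓ) * (absDisc K : ℝ) ^ ε := by
    calc (U.card : ℝ) ≤ ((∑ m ∈ Finset.Icc 1 (ℓ ^ (n * ℓ)), (hFfin m).toFinset.card : ℕ) : ℝ) := by
          exact_mod_cast Finset.card_biUnion_le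
      _ = ∑ m ∈ Finset.Icc 1 (ℓ ^ (n * ℓ)), ((hFfin m).toFinset.card : ℝ) := by push_cast; rfl
      _ ≤ _ := by
        refine Finset.sum_le_sum fun m hm => ?_
        have hm1 := (Finset.mem_Icc.1 hm).1
        have := hC (m * absDisc K ^ ℓ) (Nat.mul_pos hm1 (pow_pos hDK _))
        rw [← Set.ncard_eq_toFinset_card _ (hFfin m)]
        refine this.trans (le_of_eq ?_)
        rw [mul_assoc]
        push_cast
        rw [Real.mul_rpow (by positivity) (by positivity), ← Real.rpow_natCast,
          ← Real.rpow_mul (by positivity), mul_div_cancel₀ _ hℓ0.ne']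
  have h1 : (1 : ℝ) ≤ (absDisc K : ℝ) ^ ε :=
    Real.one_le_rpow (by exact_mod_cast hDK) hε.le
  have hS : S.card ≤ 1 + ℓ * U.card := by
    have h2 : S.card ≤ (S.erase 1).card + 1 := by
      have := Finset.pred_card_le_card_erase (s := S) (a := 1)
      omega
    have h3 := Nat.mul_le_mul_left ℓ (Finset.card_le_card hsub)
    omega
  have hS' : (S.card : ℝ) ≤ 1 + ℓ * U.card := by exact_mod_cast hS
  rw [hcl, add_mul, one_mul, mul_assoc, Finset.sum_mul]
  have := mul_le_mul_of_nonneg_left hUcard hℓ0.le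
  linarith
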